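/- Let n ≥ 2 and n' = n/(n−1). There is a constant c depending only on n such that for every weight u on ℝⁿ and every measurable function f, ‖I₁f‖_{L^{n',∞}(u·dx)} ≤ c · ∫_{ℝⁿ} |f(y)| · (Mu(y))^{1/n'} dy, where Mu is the Hardy–Littlewood maximal function of u. -/

import Mathlib

/-!
The space `L^{n',∞}(ν)`, `ν = u dx`, is tested by duality against sets of finite measure. For such a
set `E` and a point `y`, the key estimate (`potential_set_le`) is

  `∫_E |x - y|^{-(n-1)} dν(x) ≤ (4 ^ n + 1) · ν(E)^{1/n} · (Mu(y))^{(n-1)/n}`.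

It follows by bounding the kernel by its dyadic layers inside a ball of radius `r` and by `r^{-(n-1)}`
outside it: a ball of radius `ρ` around `y` has `ν`-measure at most `(2ρ)^n Mu(y)`, so the two parts are
bounded by `4 ^ n · r · Mu(y)` and `r^{-(n-1)} ν(E)`, and `r = (ν(E) / Mu(y))^{1/n}` balances them.

Taking for `E` a bounded piece of `{t < I₁|f|}` (of finite `ν`-measure by local integrability of `u`),
Chebyshev's inequality and Tonelli's theorem give
`t ν(E) ≤ (4 ^ n + 1) ν(E)^{1/n} ∫ |f| (Mu)^{(n-1)/n}`. Dividing by `ν(E)^{1/n}` and exhausting the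
level set by bounded pieces finishes the proof.
-/

open MeasureTheory ENNReal Filter Set

noncomputable section

/-- `ℝⁿ` with the Euclidean structure. -/
abbrev En (n : ℕ) := EuclideanSpace ℝ (Fin n)

/-- Axis-parallel closed cube with corner `a` and side length `h`. -/
def cube {n : ℕ} (a : En n) (h : ℝ) : Set (En n) := {y | ∀ i, a i ≤ y i ∧ y i ≤ a i + h}

/-- Riesz potential of order `1` of a (nonnegative) function:
`I₁ g (x) = ∫ g(y) |x-y|^{-(n-1)} dy`. -/
def riesz (n : ℕ) (g : En n → ℝ) (x : En n) : ℝ≥0∞ :=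
  ∫⁻ y, ENNReal.ofReal (g y) * ENNReal.ofReal (‖x - y‖ ^ (-((n : ℝ) - 1)))

/-- The quantity `(∫ g^p dμ)^{1/p}` for an `ℝ≥0∞`-valued function `g`. -/
def lpNorm {α : Type*} [MeasurableSpace α] (p : ℝ) (g : α → ℝ≥0∞) (μ : Measure α) : ℝ≥0∞ :=
  (∫⁻ x, g x ^ p ∂μ) ^ (1 / p)

/-- Average `⨍_Q g` of an `ℝ≥0∞`-valued function over a set `Q`. -/
def avgE {n : ℕ} (g : En n → ℝ≥0∞) (Q : Set (En n)) : ℝ≥0∞ :=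
  (volume Q)⁻¹ * ∫⁻ x in Q, g x

/-- The `A_{p,p*}` constant of a weight `w`; here `ps` plays the role of `p*` and
`pp` that of `p' = p/(p-1)`:
`[w]_{A_{p,p*}} = sup_Q (⨍_Q w^{p*}) (⨍_Q w^{-p'})^{p*/p'}`. -/
def Apq (n : ℕ) (ps pp : ℝ) (w : En n → ℝ) : ℝ≥0∞ :=
  ⨆ (a : En n) (h : ℝ) (_ : 0 < h),
    avgE (fun x => ENNReal.ofReal (w x) ^ ps) (cube a h) *
      avgE (fun x => ENNReal.ofReal (w x) ^ (-pp)) (cube a h) ^ (ps / pp)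

/-- The `A_{1,s}` constant of a weight `w`: the least `c` such that
`⨍_Q w^s ≤ c · essinf_Q w^s` for every cube `Q`. -/
def A1C (n : ℕ) (s : ℝ) (w : En n → ℝ) : ℝ≥0∞ :=
  sInf {c : ℝ≥0∞ | ∀ (a : En n) (h : ℝ), 0 < h →
    avgE (fun x => ENNReal.ofReal (w x) ^ s) (cube a h) ≤
      c * essInf (fun x => ENNReal.ofReal (w x) ^ s) (volume.restrict (cube a h))}

/-- Hardy–Littlewood maximal operator over axis-parallel cubes containing `x`. -/
def maximal (n : ℕ) (g : En n → ℝ≥0∞) (x : En n) : ℝ≥0∞ :=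
  ⨆ (a : En n) (h : ℝ) (_ : 0 < h) (_ : x ∈ cube a h), avgE g (cube a h)

/-- Weak `L^s` quasinorm `sup_{t>0} t · μ{|g|>t}^{1/s}` of a real function. -/
def wnormR {α : Type*} [MeasurableSpace α] (s : ℝ) (g : α → ℝ) (μ : Measure α) : ℝ≥0∞ :=
  ⨆ (t : ℝ) (_ : 0 < t), ENNReal.ofReal t * μ {x | t < |g x|} ^ (1 / s)

/-- The (real-valued) Riesz potential of order `1` of a signed function. -/
def rieszR (n : ℕ) (f : En n → ℝ) (x : En n) : ℝ :=
  ∫ y, f y * ‖x - y‖ ^ (-((n : ℝ) - 1))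

/-! ### The weighted measure, the kernel and cubes -/

/-- The measure `u dx`. -/
def weightMeasure {n : ℕ} (u : En n → ℝ) : Measure (En n) :=
  volume.withDensity fun x => ENNReal.ofReal (u x)

instance {n : ℕ} (u : En n → ℝ) : SFinite (weightMeasure u) := by
  unfold weightMeasure; infer_instance

/-- The kernel of `I₁`, as a function with values in `[0, ∞]`. For `n ≥ 2` its value on the
diagonal is `0`, because `0 ^ a = 0` for real `a ≠ 0`. -/
def kern (n : ℕ) (x y : En n) : ℝ≥0∞ := ENNReal.ofReal (‖x - y‖ ^ (-((n : ℝ) - 1)))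

lemma measurable_kern (n : ℕ) : Measurable (fun p : En n × En n => kern n p.1 p.2) := by
  unfold kern
  fun_prop

lemma cube_eq_preimage {n : ℕ} (a : En n) (h : ℝ) :
    cube a h = (MeasurableEquiv.toLp 2 (Fin n → ℝ)).symm ⁻¹' Icc (fun i => a i) (fun i => a i + h) := by
  ext y
  simp [cube, Pi.le_def, forall_and]

lemma measurableSet_cube {n : ℕ} (a : En n) (h : ℝ) : MeasurableSet (cube a h) := by
  rw [cube_eq_preimage]
  exact (MeasurableEquiv.measurable _) measurableSet_Icc

lemma volume_cube {n : ℕ} (a : En n) (h : ℝ) : volume (cube a h) = ENNReal.ofReal h ^ n := by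
  rw [cube_eq_preimage,
    (EuclideanSpace.volume_preserving_symm_measurableEquiv_toLp (Fin n)).measure_preimage
      measurableSet_Icc.nullMeasurableSet, Real.volume_Icc_pi]
  simp

lemma weight_closedBall_le {n : ℕ} (u : En n → ℝ) (y : En n) {ρ : ℝ} (hρ : 0 < ρ) :
    weightMeasure u (Metric.closedBall y ρ) ≤
      ENNReal.ofReal (2 * ρ) ^ n * maximal n (fun z => ENNReal.ofReal (u z)) y := by
  set a : En n := WithLp.toLp 2 (fun i => y i - ρ) with ha
  have hsub : Metric.closedBall y ρ ⊆ cube a (2 * ρ) := by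
    intro x hx i
    have h1 : |x i - y i| ≤ ρ := by
      have := PiLp.norm_apply_le (x - y) i
      rw [Metric.mem_closedBall, dist_eq_norm] at hx
      simpa using this.trans hx
    rw [abs_le] at h1
    simp only [ha]
    constructor <;> linarith
  have hy : y ∈ cube a (2 * ρ) := hsub (Metric.mem_closedBall_self hρ.le)
  have hM : avgE (fun z => ENNReal.ofReal (u z)) (cube a (2 * ρ)) ≤
      maximal n (fun z => ENNReal.ofReal (u z)) y :=
    le_iSup_of_le a (le_iSup_of_le (2 * ρ) (le_iSup_of_le (by positivity) (le_iSup_of_le hy le_rfl)))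
  have hv0 : ENNReal.ofReal (2 * ρ) ^ n ≠ 0 := by
    simp [hρ]
  have hvt : ENNReal.ofReal (2 * ρ) ^ n ≠ ∞ := ENNReal.pow_ne_top ENNReal.ofReal_ne_top
  calc weightMeasure u (Metric.closedBall y ρ) ≤ weightMeasure u (cube a (2 * ρ)) := measure_mono hsub
    _ = ∫⁻ z in cube a (2 * ρ), ENNReal.ofReal (u z) := withDensity_apply _ (measurableSet_cube _ _)
    _ = ENNReal.ofReal (2 * ρ) ^ n * avgE (fun z => ENNReal.ofReal (u z)) (cube a (2 * ρ)) := by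
        rw [avgE, volume_cube, ← mul_assoc, ENNReal.mul_inv_cancel hv0 hvt, one_mul]
    _ ≤ _ := by gcongr

/-! ### The potential of a set -/

/-- Dyadic domination of the kernel: on each layer `r 2^{-(k+1)} < |x - y| ≤ r 2^{-k}` the kernel is at most
`(r 2^{-(k+1)})^{-(n-1)}`, a constant placed on the whole ball of radius `r 2^{-k}`, and beyond distance `r` it is
at most `r^{-(n-1)}`. -/
lemma kern_le {n : ℕ} (hn : 2 ≤ n) {r : ℝ} (hr : 0 < r) (x y : En n) :
    kern n x y ≤ (∑' k : ℕ, (Metric.closedBall y (r * (1 / 2) ^ k)).indicator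
        (fun _ => ENNReal.ofReal ((r * (1 / 2) ^ (k + 1)) ^ (-((n : ℝ) - 1)))) x) +
      ENNReal.ofReal (r ^ (-((n : ℝ) - 1))) := by
  have hn1 : (0 : ℝ) < (n : ℝ) - 1 := by
    have : (2 : ℝ) ≤ n := by exact_mod_cast hn
    linarith
  unfold kern
  rcases (norm_nonneg (x - y)).eq_or_lt with h0 | h0
  · rw [← h0, Real.zero_rpow (by linarith)]
    simp
  rcases le_or_gt ‖x - y‖ r with h | h
  · obtain ⟨k, hk1, hk2⟩ := exists_nat_pow_near_of_lt_one (x := ‖x - y‖ / r) (y := (1 / 2 : ℝ))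
      (by positivity) ((div_le_one hr).2 h) (by norm_num) (by norm_num)
    rw [lt_div_iff₀ hr, mul_comm] at hk1
    rw [div_le_iff₀ hr, mul_comm] at hk2
    refine le_trans ?_ le_self_add
    refine le_trans ?_ (ENNReal.le_tsum k)
    rw [indicator_of_mem (by rwa [Metric.mem_closedBall, dist_eq_norm])]
    exact ENNReal.ofReal_le_ofReal
      (Real.rpow_le_rpow_of_nonpos (by positivity) hk1.le (by linarith))
  · refine le_trans ?_ le_add_self
    exact ENNReal.ofReal_le_ofReal (Real.rpow_le_rpow_of_nonpos hr h.le (by linarith))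

/-- The potential of a set `E`, split at radius `r`. -/
lemma potential_split {n : ℕ} (hn : 2 ≤ n) (u : En n → ℝ) (E : Set (En n)) (y : En n) {r : ℝ}
    (hr : 0 < r) :
    ∫⁻ x in E, kern n x y ∂(weightMeasure u) ≤
      4 ^ n * ENNReal.ofReal r * maximal n (fun z => ENNReal.ofReal (u z)) y +
        ENNReal.ofReal (r ^ (-((n : ℝ) - 1))) * weightMeasure u E := by
  set M := maximal n (fun z => ENNReal.ofReal (u z)) y
  calc ∫⁻ x in E, kern n x y ∂(weightMeasure u)
      ≤ ∫⁻ x in E, ((∑' k : ℕ, (Metric.closedBall y (r * (1 / 2) ^ k)).indicator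
          (fun _ => ENNReal.ofReal ((r * (1 / 2) ^ (k + 1)) ^ (-((n : ℝ) - 1)))) x) +
          ENNReal.ofReal (r ^ (-((n : ℝ) - 1)))) ∂(weightMeasure u) :=
        lintegral_mono fun x => kern_le hn hr x y
    _ = (∫⁻ x in E, ∑' k : ℕ, (Metric.closedBall y (r * (1 / 2) ^ k)).indicator
          (fun _ => ENNReal.ofReal ((r * (1 / 2) ^ (k + 1)) ^ (-((n : ℝ) - 1)))) x
            ∂(weightMeasure u)) +
          ENNReal.ofReal (r ^ (-((n : ℝ) - 1))) * weightMeasure u E := by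
        rw [lintegral_add_right _ measurable_const, setLIntegral_const]
    _ ≤ _ := by
      gcongr
      rw [lintegral_tsum fun k =>
        (measurable_const.indicator Metric.isClosed_closedBall.measurableSet).aemeasurable]
      have hsum : ∑' k : ℕ, ENNReal.ofReal (r * (1 / 2) ^ (k + 1)) = ENNReal.ofReal r := by
        have h := hasSum_geometric_two' r
        have he : ∀ k : ℕ, r * (1 / 2) ^ (k + 1) = r / 2 / 2 ^ k := by
          intro k
          rw [pow_succ, one_div, inv_pow]
          field_simp
        simp_rw [he]
        rw [← ENNReal.ofReal_tsum_of_nonneg (fun k => by positivity) h.summable, h.tsum_eq]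
      rw [← hsum, ← ENNReal.tsum_mul_left, ← ENNReal.tsum_mul_right]
      refine ENNReal.tsum_le_tsum fun k => ?_
      rw [lintegral_indicator_const Metric.isClosed_closedBall.measurableSet]
      set a : ℝ := r * (1 / 2) ^ (k + 1) with ha
      have ha0 : 0 < a := by positivity
      have h2 : 2 * (r * (1 / 2) ^ k) = 4 * a := by rw [ha, pow_succ]; ring
      calc ENNReal.ofReal (a ^ (-((n : ℝ) - 1))) *
            ((weightMeasure u).restrict E) (Metric.closedBall y (r * (1 / 2) ^ k))
          ≤ ENNReal.ofReal (a ^ (-((n : ℝ) - 1))) * (ENNReal.ofReal (4 * a) ^ n * M) := by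
            gcongr
            rw [← h2]
            exact (Measure.restrict_apply_le _ _).trans (weight_closedBall_le u y (by positivity))
        _ = 4 ^ n * ENNReal.ofReal a * M := by
            rw [← mul_assoc]
            congr 1
            -- `a^{-(n-1)} (4a)^n = 4^n a`
            rw [← ENNReal.ofReal_pow (by positivity), ← ENNReal.ofReal_mul (by positivity)]
            have : a ^ (-((n : ℝ) - 1)) * (4 * a) ^ n = 4 ^ n * a := by
              rw [mul_pow, ← Real.rpow_natCast a n, mul_left_comm, ← Real.rpow_add ha0]
              simp
            rw [this, ENNReal.ofReal_mul (by positivity), ENNReal.ofReal_pow (by positivity)]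
            simp

/-- The estimate of the potential of a set `E`, obtained from `potential_split` with
`r = (ν(E) / Mu(y))^{1/n}`. -/
lemma potential_set_le {n : ℕ} (hn : 2 ≤ n) (u : En n → ℝ) (E : Set (En n)) (y : En n)
    (h0 : weightMeasure u E ≠ 0) (ht : weightMeasure u E ≠ ∞) :
    ∫⁻ x in E, kern n x y ∂(weightMeasure u) ≤
      (4 ^ n + 1) * weightMeasure u E ^ (1 / (n : ℝ)) *
        maximal n (fun z => ENNReal.ofReal (u z)) y ^ (((n : ℝ) - 1) / n) := by
  have hn2 : (2 : ℝ) ≤ n := by exact_mod_cast hn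
  have hn0 : (0 : ℝ) < n := by linarith
  have hn1 : (0 : ℝ) < (n : ℝ) - 1 := by linarith
  have hsplit := fun r hr => potential_split hn u E y (r := r) hr
  set M := maximal n (fun z => ENNReal.ofReal (u z)) y with hMdef
  set U := weightMeasure u E with hUdef
  have hU1 : U ^ (1 / (n : ℝ)) ≠ 0 := by
    simp [ENNReal.rpow_eq_zero_iff, h0, ht]
  rcases eq_or_ne M ∞ with hM | hM
  · rw [hM, ENNReal.top_rpow_of_pos (by positivity), ENNReal.mul_top]
    · exact le_top
    · exact mul_ne_zero (by simp) hU1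
  rcases eq_or_ne M 0 with hM0 | hM0
  · -- here the first part vanishes for every `r`, and the second one tends to `0` as `r → ∞`
    have hlim : Tendsto (fun r : ℝ => ENNReal.ofReal (r ^ (-((n : ℝ) - 1))) * U) atTop (nhds 0) := by
      have h := ENNReal.tendsto_ofReal (tendsto_rpow_neg_atTop hn1)
      have := ENNReal.Tendsto.mul_const (b := U) h (Or.inr ht)
      simpa using this
    have : ∫⁻ x in E, kern n x y ∂(weightMeasure u) ≤ 0 := by
      refine ge_of_tendsto hlim ?_
      filter_upwards [eventually_gt_atTop 0] with r hr
      simpa [hM0] using hsplit r hr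
    exact this.trans zero_le
  obtain ⟨m, hm, hmM⟩ : ∃ m : ℝ, 0 < m ∧ M = ENNReal.ofReal m :=
    ⟨M.toReal, ENNReal.toReal_pos hM0 hM, (ENNReal.ofReal_toReal hM).symm⟩
  obtain ⟨v, hv, hvU⟩ : ∃ v : ℝ, 0 < v ∧ U = ENNReal.ofReal v :=
    ⟨U.toReal, ENNReal.toReal_pos h0 ht, (ENNReal.ofReal_toReal ht).symm⟩
  have hr : 0 < v ^ (1 / (n : ℝ)) * m ^ (-(1 / (n : ℝ))) := by positivity
  refine (hsplit _ hr).trans (le_of_eq ?_)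
  set r := v ^ (1 / (n : ℝ)) * m ^ (-(1 / (n : ℝ))) with hrdef
  set w := v ^ (1 / (n : ℝ)) * m ^ (((n : ℝ) - 1) / n) with hw
  have e1 : r * m = w := by
    rw [hrdef, hw, mul_assoc, ← Real.rpow_add_one hm.ne']
    congr 2
    field_simp
    ring
  have e2 : r ^ (-((n : ℝ) - 1)) * v = w := by
    rw [hrdef, hw, Real.mul_rpow (by positivity) (by positivity), ← Real.rpow_mul hv.le,
      ← Real.rpow_mul hm.le, mul_right_comm, ← Real.rpow_add_one hv.ne']
    congr 2
    · field_simp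
      ring
    · field_simp
  have e3 : U ^ (1 / (n : ℝ)) * M ^ (((n : ℝ) - 1) / n) = ENNReal.ofReal w := by
    rw [hvU, hmM, ENNReal.ofReal_rpow_of_pos hv, ENNReal.ofReal_rpow_of_pos hm,
      ← ENNReal.ofReal_mul (by positivity)]
  rw [mul_assoc, mul_assoc, e3, hvU, hmM, ← ENNReal.ofReal_mul hr.le,
    ← ENNReal.ofReal_mul (by positivity), e1, e2, add_mul, one_mul]

/-! ### The weak-type bound -/

/-- The nonnegative Riesz potential `I₁|f|`. -/
def rieszAbs (n : ℕ) (f : En n → ℝ) (x : En n) : ℝ≥0∞ :=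
  ∫⁻ y, ENNReal.ofReal |f y| * kern n x y

lemma measurable_integrand {n : ℕ} {f : En n → ℝ} (hf : Measurable f) :
    Measurable (fun p : En n × En n => ENNReal.ofReal |f p.2| * kern n p.1 p.2) :=
  (ENNReal.measurable_ofReal.comp (hf.comp measurable_snd).abs).mul (measurable_kern n)

lemma measurable_rieszAbs {n : ℕ} {f : En n → ℝ} (hf : Measurable f) : Measurable (rieszAbs n f) :=
  (measurable_integrand hf).lintegral_prod_right'

lemma ofReal_abs_rieszR_le (n : ℕ) (f : En n → ℝ) (x : En n) :
    ENNReal.ofReal |rieszR n f x| ≤ rieszAbs n f x := by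
  rw [← Real.enorm_eq_ofReal_abs]
  refine (enorm_integral_le_lintegral_enorm _).trans (le_of_eq (lintegral_congr fun y => ?_))
  rw [enorm_mul, Real.enorm_eq_ofReal_abs, Real.enorm_of_nonneg (by positivity), kern]

/-- Weak-type bound on a set `E` of finite `u dx`-measure on which `I₁|f| ≥ t`. -/
lemma weak_bound_of_finite {n : ℕ} (hn : 2 ≤ n) (u : En n → ℝ) {f : En n → ℝ} (hf : Measurable f)
    {E : Set (En n)} (hE : MeasurableSet E) (ht : weightMeasure u E ≠ ∞) {t : ℝ≥0∞}
    (htE : ∀ x ∈ E, t ≤ rieszAbs n f x) :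
    t * weightMeasure u E ^ (((n : ℝ) - 1) / n) ≤ (4 ^ n + 1) * ∫⁻ y, ENNReal.ofReal |f y| *
      maximal n (fun z => ENNReal.ofReal (u z)) y ^ (((n : ℝ) - 1) / n) := by
  have hn2 : (2 : ℝ) ≤ n := by exact_mod_cast hn
  have hn0 : (0 : ℝ) < n := by linarith
  have hn1 : (0 : ℝ) < (n : ℝ) - 1 := by linarith
  rcases eq_or_ne (weightMeasure u E) 0 with h0 | h0
  · rw [h0, ENNReal.zero_rpow_of_pos (by positivity), mul_zero]
    exact zero_le
  have hpot := fun y => potential_set_le hn u E y h0 ht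
  set U := weightMeasure u E with hU
  set J := ∫⁻ y, ENNReal.ofReal |f y| *
      maximal n (fun z => ENNReal.ofReal (u z)) y ^ (((n : ℝ) - 1) / n) with hJ
  have hU0 : U ^ (1 / (n : ℝ)) ≠ 0 := by simp [ENNReal.rpow_eq_zero_iff, h0, ht]
  have hUt : U ^ (1 / (n : ℝ)) ≠ ∞ := ENNReal.rpow_ne_top_of_nonneg (by positivity) ht
  have hCt : (4 ^ n + 1 : ℝ≥0∞) * U ^ (1 / (n : ℝ)) ≠ ∞ :=
    ENNReal.mul_ne_top (by simp) hUt
  have key : t * U ≤ (4 ^ n + 1) * U ^ (1 / (n : ℝ)) * J := by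
    calc t * U = ∫⁻ _ in E, t ∂(weightMeasure u) := by rw [setLIntegral_const]
      _ ≤ ∫⁻ x in E, rieszAbs n f x ∂(weightMeasure u) := setLIntegral_mono' hE htE
      _ = ∫⁻ y, ∫⁻ x in E, ENNReal.ofReal |f y| * kern n x y ∂(weightMeasure u) :=
          lintegral_lintegral_swap (measurable_integrand hf).aemeasurable
      _ = ∫⁻ y, ENNReal.ofReal |f y| * ∫⁻ x in E, kern n x y ∂(weightMeasure u) :=
          lintegral_congr fun y => lintegral_const_mul' _ _ ENNReal.ofReal_ne_top
      _ ≤ ∫⁻ y, (4 ^ n + 1) * U ^ (1 / (n : ℝ)) * (ENNReal.ofReal |f y| *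
            maximal n (fun z => ENNReal.ofReal (u z)) y ^ (((n : ℝ) - 1) / n)) := by
          refine lintegral_mono fun y => ?_
          rw [mul_left_comm]
          gcongr
          exact hpot y
      _ = _ := lintegral_const_mul' _ _ hCt
  have hsplit : U ^ (((n : ℝ) - 1) / n) * U ^ (1 / (n : ℝ)) = U := by
    rw [← ENNReal.rpow_add _ _ h0 ht, ← add_div, sub_add_cancel, div_self hn0.ne', ENNReal.rpow_one]
  rw [← ENNReal.mul_le_mul_iff_left hU0 hUt, mul_assoc, hsplit, mul_right_comm]
  exact key

lemma weight_closedBall_ne_top {n : ℕ} {u : En n → ℝ} (hu : LocallyIntegrable u volume) (R : ℝ) :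
    weightMeasure u (Metric.closedBall 0 R) ≠ ∞ := by
  rw [weightMeasure, withDensity_apply _ Metric.isClosed_closedBall.measurableSet]
  have := (hu.integrableOn_isCompact (isCompact_closedBall 0 R)).lintegral_lt_top
  exact this.ne

/-- Fefferman–Stein type weak bound for `I₁`:
`‖I₁ f‖_{L^{n',∞}(u dx)} ≤ c ∫ |f| (Mu)^{1/n'}`, `n' = n/(n-1)`. -/
theorem statement4 (n : ℕ) (hn : 2 ≤ n) :
    ∃ c : ℝ, 0 < c ∧ ∀ u : En n → ℝ, (∀ x, 0 ≤ u x) → LocallyIntegrable u volume →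
      ∀ f : En n → ℝ, Measurable f →
        wnormR ((n : ℝ) / (n - 1)) (rieszR n f)
            (volume.withDensity fun x => ENNReal.ofReal (u x)) ≤
          ENNReal.ofReal c *
            ∫⁻ y, ENNReal.ofReal |f y| *
              maximal n (fun z => ENNReal.ofReal (u z)) y ^ (((n : ℝ) - 1) / n) := by
  refine ⟨4 ^ n + 1, by positivity, fun u _ hu f hf => ?_⟩
  have hn2 : (2 : ℝ) ≤ n := by exact_mod_cast hn
  have hn1 : (0 : ℝ) < (n : ℝ) - 1 := by linarith
  have hc : ENNReal.ofReal (4 ^ n + 1) = 4 ^ n + 1 := by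
    rw [ENNReal.ofReal_add (by positivity) (by positivity), ENNReal.ofReal_pow (by positivity)]
    simp
  rw [hc, wnormR]
  refine iSup₂_le fun t ht => ?_
  rw [one_div_div]
  set J := ∫⁻ y, ENNReal.ofReal |f y| *
      maximal n (fun z => ENNReal.ofReal (u z)) y ^ (((n : ℝ) - 1) / n) with hJ
  set S : Set (En n) := {x | ENNReal.ofReal t ≤ rieszAbs n f x} with hS
  have hSm : MeasurableSet S := measurableSet_le measurable_const (measurable_rieszAbs hf)
  have hsub : {x | t < |rieszR n f x|} ⊆ ⋃ k : ℕ, S ∩ Metric.closedBall 0 (k : ℝ) := by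
    rw [← inter_iUnion, Metric.iUnion_closedBall_nat, inter_univ]
    intro x hx
    exact (ENNReal.ofReal_le_ofReal (le_of_lt hx)).trans (ofReal_abs_rieszR_le n f x)
  have hmono : Monotone fun k : ℕ => S ∩ Metric.closedBall (0 : En n) (k : ℝ) := fun i j hij =>
    inter_subset_inter_right _ (Metric.closedBall_subset_closedBall (by exact_mod_cast hij))
  have hpiece : ∀ k : ℕ, ENNReal.ofReal t * weightMeasure u (S ∩ Metric.closedBall 0 (k : ℝ)) ^
      (((n : ℝ) - 1) / n) ≤ (4 ^ n + 1) * J := fun k =>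
    weak_bound_of_finite hn u hf (hSm.inter Metric.isClosed_closedBall.measurableSet)
      (measure_ne_top_of_subset inter_subset_right (weight_closedBall_ne_top hu k))
      fun x hx => hx.1
  have hlim : Tendsto (fun k : ℕ => ENNReal.ofReal t *
      weightMeasure u (S ∩ Metric.closedBall 0 (k : ℝ)) ^ (((n : ℝ) - 1) / n)) atTop
      (nhds (ENNReal.ofReal t * weightMeasure u (⋃ k : ℕ, S ∩ Metric.closedBall 0 (k : ℝ)) ^
        (((n : ℝ) - 1) / n))) :=
    ENNReal.Tendsto.const_mul
      ((ENNReal.continuous_rpow_const.tendsto _).comp (tendsto_measure_iUnion_atTop hmono))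
      (Or.inr ENNReal.ofReal_ne_top)
  refine le_trans ?_ (le_of_tendsto' hlim hpiece)
  change ENNReal.ofReal t * weightMeasure u _ ^ _ ≤ _
  gcongr
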